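/- Fix ε₀ ∈ (0,1]. There exist constants ε > 0 and C > 0, depending only on n, P, c, c₀ and ε₀, such that for every t ∈ [ε₀,1] and every solution φ of the continuity-method equation at parameter t, with x^t the unique minimum point of w_t := tφ + (1−t)φ⁰, one has w_t(x) ≥ ε|x − x^t| − C for all x ∈ ℝⁿ. -/

import Mathlib

open MeasureTheory

noncomputable section

/-- Dot product on `Fin n → ℝ`. -/
def dotp {n : ℕ} (x y : Fin n → ℝ) : ℝ := ∑ j, x j * y j

/-- The affine functions `lᵢ(y) = ⟨y, n⁽ⁱ⁾⟩ + 1`. -/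
def lfun {n d : ℕ} (N : Fin d → Fin n → ℤ) (i : Fin d) (y : Fin n → ℝ) : ℝ :=
  (∑ j, y j * (N i j : ℝ)) + 1

/-- The dual polytope `P = {y : ⟨y, n⁽ⁱ⁾⟩ ≥ -1 for all i}`. -/
def Pset {n d : ℕ} (N : Fin d → Fin n → ℤ) : Set (Fin n → ℝ) :=
  {y | ∀ i, (∑ j, y j * (N i j : ℝ)) ≥ -1}

/-- The function `u⁰(y) = ∑ᵢ lᵢ(y) log lᵢ(y)`. -/
def u0 {n d : ℕ} (N : Fin d → Fin n → ℤ) (y : Fin n → ℝ) : ℝ :=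
  ∑ i, lfun N i y * Real.log (lfun N i y)

/-- The Legendre transform `φ⁰(x) = sup_{y ∈ P°} (⟨x,y⟩ - u⁰(y))`. -/
def phi0 {n d : ℕ} (N : Fin d → Fin n → ℤ) (x : Fin n → ℝ) : ℝ :=
  sSup ((fun y => dotp x y - u0 N y) '' interior (Pset N))

/-- The gradient of a function on `Fin n → ℝ`. -/
def grad {n : ℕ} (f : (Fin n → ℝ) → ℝ) (x : Fin n → ℝ) : Fin n → ℝ :=
  fun p => fderiv ℝ f x (Pi.single p 1)

/-- Second partial derivatives (Hessian matrix) of a function on `Fin n → ℝ`. -/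
def hess {n : ℕ} (f : (Fin n → ℝ) → ℝ) (x : Fin n → ℝ) : Matrix (Fin n) (Fin n) ℝ :=
  Matrix.of fun p q => fderiv ℝ (fun z => fderiv ℝ f z (Pi.single q 1)) x (Pi.single p 1)

/-- The Euclidean norm of `x ∈ ℝⁿ`. -/
def eucNorm {n : ℕ} (x : Fin n → ℝ) : ℝ := Real.sqrt (∑ j, x j ^ 2)

/-- The function `w_t = tφ + (1-t)φ⁰`. -/
def wfun {n d : ℕ} (N : Fin d → Fin n → ℤ) (t : ℝ) (φ : (Fin n → ℝ) → ℝ)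
    (x : Fin n → ℝ) : ℝ :=
  t * φ x + (1 - t) * phi0 N x

/-- A solution of the continuity-method equation at parameter `t`: a smooth strictly
convex `φ : ℝⁿ → ℝ` whose gradient map is a diffeomorphism from `ℝⁿ` onto `P°`,
satisfying `det D²φ = exp(-c₀ - w_t - ⟨c, Dφ⟩)` with `w_t = tφ + (1-t)φ⁰`. -/
def IsSolution {n d : ℕ} (N : Fin d → Fin n → ℤ) (c : Fin n → ℝ) (c₀ t : ℝ)
    (φ : (Fin n → ℝ) → ℝ) : Prop :=
  ContDiff ℝ (⊤ : ℕ∞) φ ∧ StrictConvexOn ℝ Set.univ φ ∧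
  Set.BijOn (grad φ) Set.univ (interior (Pset N)) ∧
  ContDiffOn ℝ (⊤ : ℕ∞) (Function.invFun (grad φ)) (interior (Pset N)) ∧
  ∀ x, (hess φ x).det = Real.exp (-c₀ - wfun N t φ x - dotp c (grad φ x))

lemma abs_dotp_le {n : ℕ} {B : ℝ} (z y : Fin n → ℝ) (hy : ∀ j, |y j| ≤ B) :
    |dotp z y| ≤ n * B * ‖z‖ := by
  unfold dotp
  calc |∑ j, z j * y j| ≤ ∑ j, |z j * y j| := Finset.abs_sum_le_sum_abs _ _
    _ ≤ ∑ _j : Fin n, ‖z‖ * B := by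
        refine Finset.sum_le_sum fun j _ => ?_
        rw [abs_mul]
        exact mul_le_mul (norm_le_pi_norm z j) (hy j) (abs_nonneg _) (norm_nonneg _)
    _ = n * B * ‖z‖ := by simp; ring

lemma dotp_add {n : ℕ} (x z y : Fin n → ℝ) : dotp (x + z) y = dotp x y + dotp z y := by
  simp [dotp, add_mul, Finset.sum_add_distrib]

lemma dotp_smul {n : ℕ} (a : ℝ) (x y : Fin n → ℝ) : dotp (a • x) y = a * dotp x y := by
  simp [dotp, Finset.mul_sum, mul_assoc]

lemma Pset_bdd {n d : ℕ} (N : Fin d → Fin n → ℤ)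
    (hQ : (0 : Fin n → ℝ) ∈ interior (convexHull ℝ (Set.range fun i => fun j => (N i j : ℝ)))) :
    ∃ B : ℝ, 1 ≤ B ∧ ∀ y ∈ Pset N, ∀ j, |y j| ≤ B := by
  rw [mem_interior_iff_mem_nhds, Metric.mem_nhds_iff] at hQ
  obtain ⟨δ, hδ, hb⟩ := hQ
  refine ⟨max 1 (2 / δ), le_max_left _ _, fun y hy j => le_trans ?_ (le_max_right _ _)⟩
  have hcv : Convex ℝ {z : Fin n → ℝ | -1 ≤ dotp z y} := by
    intro a ha b hb s t hs ht hst
    simp only [Set.mem_ofPred_eq, dotp_add, dotp_smul] at *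
    nlinarith
  have hsub : convexHull ℝ (Set.range fun i => fun j => (N i j : ℝ)) ⊆
      {z : Fin n → ℝ | -1 ≤ dotp z y} := by
    refine convexHull_min ?_ hcv
    rintro _ ⟨i, rfl⟩
    have := hy i
    simp only [dotp, Set.mem_ofPred_eq]
    simpa [mul_comm] using this
  have key : ∀ s : ℝ, |s| < δ → -1 ≤ s * y j := by
    intro s hs
    have h1 : (Pi.single j s : Fin n → ℝ) ∈ Metric.ball (0 : Fin n → ℝ) δ := by
      simp [Pi.norm_single, hs]
    have := hsub (hb h1)
    simpa [dotp, Pi.single_apply] using this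
  have h1 := key (δ / 2) (by rw [abs_of_pos (by positivity)]; linarith)
  have h2 := key (-(δ / 2)) (by rw [abs_neg, abs_of_pos (by positivity)]; linarith)
  rw [abs_le, le_div_iff₀ hδ, ← neg_div, div_le_iff₀ hδ]
  constructor <;> nlinarith

lemma zero_mem_int {n d : ℕ} (N : Fin d → Fin n → ℤ) : (0 : Fin n → ℝ) ∈ interior (Pset N) := by
  rw [mem_interior]
  refine ⟨{y | ∀ i, -1 < ∑ j, y j * (N i j : ℝ)}, ?_, ?_, ?_⟩
  · intro y hy i
    exact (hy i).le
  · rw [Set.ofPred_forall]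
    exact isOpen_iInter_of_finite fun i => isOpen_lt continuous_const (by fun_prop)
  · intro i
    simp

lemma u0_ge {n d : ℕ} (N : Fin d → Fin n → ℤ) (y : Fin n → ℝ) (hy : y ∈ Pset N) :
    -(d : ℝ) ≤ u0 N y := by
  unfold u0
  have : ∑ _i : Fin d, (-1 : ℝ) ≤ ∑ i, lfun N i y * Real.log (lfun N i y) := by
    refine Finset.sum_le_sum fun i _ => ?_
    have h0 : 0 ≤ lfun N i y := by have := hy i; unfold lfun; linarith
    rcases h0.eq_or_lt with h | h
    · rw [← h]; simp
    · have := Real.one_sub_inv_le_log_of_pos h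
      have h2 := mul_le_mul_of_nonneg_left this h0
      have h3 : lfun N i y * (1 - (lfun N i y)⁻¹) = lfun N i y - 1 := by field_simp
      linarith
  simpa using this

lemma phi0_bdd {n d : ℕ} (N : Fin d → Fin n → ℤ) {B : ℝ} (hB : ∀ y ∈ Pset N, ∀ j, |y j| ≤ B)
    (x : Fin n → ℝ) : BddAbove ((fun y => dotp x y - u0 N y) '' interior (Pset N)) := by
  refine ⟨n * B * ‖x‖ + d, ?_⟩
  rintro _ ⟨y, hy, rfl⟩
  have hy' := interior_subset hy
  have h1 := (abs_le.1 (abs_dotp_le x y (hB y hy'))).2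
  have h2 := u0_ge N y hy'
  simp only
  linarith

lemma phi0_le {n d : ℕ} (N : Fin d → Fin n → ℤ) {B : ℝ} (hB : ∀ y ∈ Pset N, ∀ j, |y j| ≤ B)
    (x y : Fin n → ℝ) (hy : y ∈ interior (Pset N)) : dotp x y - u0 N y ≤ phi0 N x :=
  le_csSup (phi0_bdd N hB x) ⟨y, hy, rfl⟩

lemma phi0_near {n d : ℕ} (N : Fin d → Fin n → ℤ) (x : Fin n → ℝ) :
    ∃ y ∈ interior (Pset N), phi0 N x - 1 < dotp x y - u0 N y := by
  obtain ⟨_, ⟨y, hy, rfl⟩, h⟩ := exists_lt_of_lt_csSup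
    (s := (fun y => dotp x y - u0 N y) '' interior (Pset N)) ⟨_, ⟨0, zero_mem_int N, rfl⟩⟩
    (show phi0 N x - 1 < _ from sub_one_lt _)
  exact ⟨y, hy, h⟩

lemma phi0_convex {n d : ℕ} (N : Fin d → Fin n → ℤ) {B : ℝ}
    (hB : ∀ y ∈ Pset N, ∀ j, |y j| ≤ B) : ConvexOn ℝ Set.univ (phi0 N) := by
  refine ⟨convex_univ, fun a _ b _ s t hs ht hst => ?_⟩
  refine csSup_le ⟨_, ⟨0, zero_mem_int N, rfl⟩⟩ ?_
  rintro _ ⟨y, hy, rfl⟩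
  have h1 := mul_le_mul_of_nonneg_left (phi0_le N hB a y hy) hs
  have h2 := mul_le_mul_of_nonneg_left (phi0_le N hB b y hy) ht
  simp only [dotp_add, dotp_smul, smul_eq_mul]
  have : u0 N y = s * u0 N y + t * u0 N y := by rw [← add_mul, hst, one_mul]
  linarith

lemma phi0_lip {n d : ℕ} (N : Fin d → Fin n → ℤ) {B : ℝ}
    (hB : ∀ y ∈ Pset N, ∀ j, |y j| ≤ B) (x z : Fin n → ℝ) :
    phi0 N (x + z) ≤ phi0 N x + n * B * ‖z‖ := by
  refine csSup_le ⟨_, ⟨0, zero_mem_int N, rfl⟩⟩ ?_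
  rintro _ ⟨y, hy, rfl⟩
  have h1 := phi0_le N hB x y hy
  have h2 := (abs_le.1 (abs_dotp_le z y (hB y (interior_subset hy)))).2
  simp only [dotp_add]
  linarith

lemma fderiv_eq_dotp {n : ℕ} (f : (Fin n → ℝ) → ℝ) (x z : Fin n → ℝ) :
    fderiv ℝ f x z = dotp z (grad f x) := by
  conv_lhs => rw [pi_eq_sum_univ' z]
  simp only [map_sum, map_smul, dotp, grad, smul_eq_mul]

lemma conv_line {n : ℕ} {f : (Fin n → ℝ) → ℝ} (hf : ConvexOn ℝ Set.univ f) (x v : Fin n → ℝ) :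
    ConvexOn ℝ Set.univ (fun s : ℝ => f (x + s • v)) := by
  refine ⟨convex_univ, fun a _ b _ s t hs ht hst => ?_⟩
  have := hf.2 (Set.mem_univ (x + a • v)) (Set.mem_univ (x + b • v)) hs ht hst
  refine le_trans (le_of_eq ?_) this
  simp only []
  congr 1
  have h : x = s • x + t • x := by rw [← add_smul, hst, one_smul]
  conv_lhs => rw [h]
  simp only [smul_add, smul_smul, add_smul, smul_eq_mul]
  abel

lemma hasDeriv_line {n : ℕ} {f : (Fin n → ℝ) → ℝ} (hf : Differentiable ℝ f) (x v : Fin n → ℝ)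
    (s : ℝ) : HasDerivAt (fun s : ℝ => f (x + s • v)) (fderiv ℝ f (x + s • v) v) s := by
  have h1 : HasDerivAt (fun s : ℝ => x + s • v) v s := by
    simpa using ((hasDerivAt_id s).smul_const v).const_add x
  exact (hf (x + s • v)).hasFDerivAt.comp_hasDerivAt s h1

lemma phi_lip {n d : ℕ} (N : Fin d → Fin n → ℤ) {B : ℝ}
    (hB : ∀ y ∈ Pset N, ∀ j, |y j| ≤ B) {φ : (Fin n → ℝ) → ℝ} (hd : Differentiable ℝ φ)
    (hc : ConvexOn ℝ Set.univ φ) (hg : ∀ x, grad φ x ∈ Pset N) (x z : Fin n → ℝ) :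
    φ (x + z) ≤ φ x + n * B * ‖z‖ := by
  have h1 := (conv_line hc x z).slope_le_of_hasDerivAt (Set.mem_univ 0) (Set.mem_univ 1) one_pos
    (hasDeriv_line hd x z 1)
  rw [slope_def_field, fderiv_eq_dotp] at h1
  have h2 := (abs_le.1 (abs_dotp_le z _ (hB _ (hg (x + (1 : ℝ) • z))))).2
  simp only [one_smul, zero_smul, add_zero, sub_zero, div_one] at h1 h2
  linarith

lemma w_convex {n d : ℕ} (N : Fin d → Fin n → ℤ) {B : ℝ}
    (hB : ∀ y ∈ Pset N, ∀ j, |y j| ≤ B) {φ : (Fin n → ℝ) → ℝ}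
    (hc : ConvexOn ℝ Set.univ φ) {t : ℝ} (ht : 0 ≤ t) (ht1 : t ≤ 1) :
    ConvexOn ℝ Set.univ (wfun N t φ) :=
  (hc.smul ht).add ((phi0_convex N hB).smul (sub_nonneg.2 ht1))

lemma w_lip {n d : ℕ} (N : Fin d → Fin n → ℤ) {B : ℝ}
    (hB : ∀ y ∈ Pset N, ∀ j, |y j| ≤ B) {φ : (Fin n → ℝ) → ℝ} (hd : Differentiable ℝ φ)
    (hc : ConvexOn ℝ Set.univ φ) (hg : ∀ x, grad φ x ∈ Pset N) {t : ℝ} (ht : 0 ≤ t)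
    (ht1 : t ≤ 1) (x z : Fin n → ℝ) :
    wfun N t φ (x + z) ≤ wfun N t φ x + n * B * ‖z‖ := by
  have h1 := mul_le_mul_of_nonneg_left (phi_lip N hB hd hc hg x z) ht
  have h2 := mul_le_mul_of_nonneg_left (phi0_lip N hB x z) (sub_nonneg.2 ht1)
  unfold wfun
  linarith

/-- linear growth from bounded sublevel set -/
lemma growth {n : ℕ} {w : (Fin n → ℝ) → ℝ} (hw : ConvexOn ℝ Set.univ w) {xt : Fin n → ℝ}
    (q : (Fin n → ℝ) → ℝ) (hq : ∀ (a : ℝ) z, 0 ≤ a → q (a • z) = a * q z) {r : ℝ} (hr : 0 ≤ r)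
    (hmin : ∀ x, w xt ≤ w x)
    (hK : ∀ z, w (xt + z) ≤ w xt + 1 → q z ≤ r) (z : Fin n → ℝ) :
    q z ≤ r * (1 + w (xt + z) - w xt) := by
  set σ := max 1 (w (xt + z) - w xt) with hσ
  have h1 : 1 ≤ σ := le_max_left _ _
  have h2 : w (xt + z) - w xt ≤ σ := le_max_right _ _
  have h0 : 0 < σ := by linarith
  have h3 : σ ≤ 1 + w (xt + z) - w xt := by
    have := hmin (xt + z)
    exact max_le (by linarith) (by linarith)
  have hσ1 : σ⁻¹ ≤ 1 := inv_le_one_of_one_le₀ h1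
  have h4 := hw.2 (Set.mem_univ xt) (Set.mem_univ (xt + z)) (sub_nonneg.2 hσ1)
    (inv_nonneg.2 h0.le) (by ring)
  have h5 : (1 - σ⁻¹) • xt + σ⁻¹ • (xt + z) = xt + σ⁻¹ • z := by
    simp only [sub_smul, smul_add, one_smul]; abel
  rw [h5] at h4
  simp only [smul_eq_mul] at h4
  have h6 : σ⁻¹ * (w (xt + z) - w xt) ≤ 1 := by
    rw [inv_mul_le_iff₀ h0]; linarith
  have h7 := hK (σ⁻¹ • z) (by linarith)
  rw [hq _ _ (inv_nonneg.2 h0.le), inv_mul_le_iff₀ h0] at h7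
  nlinarith

lemma second_deriv_test {k k' : ℝ → ℝ} {c : ℝ} (hk : ∀ s, HasDerivAt k (k' s) s)
    (hk' : HasDerivAt k' c 0) (hm : IsLocalMax k 0) : c ≤ 0 := by
  by_contra! hc
  have hd : deriv k = k' := funext fun s => (hk s).deriv
  have h0 : deriv k 0 = 0 := hm.deriv_eq_zero
  have hmin : IsLocalMin k 0 := isLocalMin_of_deriv_deriv_pos
    (by rw [hd, hk'.deriv]; exact hc) h0 (hk 0).continuousAt
  have heq : k =ᶠ[nhds 0] fun _ => k 0 := by
    filter_upwards [hmin, hm] with s h1 h2 using le_antisymm h2 h1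
  have h1 := heq.deriv.deriv_eq
  rw [hd, hk'.deriv] at h1
  simp at h1
  linarith

lemma hess_apply {n : ℕ} {φ : (Fin n → ℝ) → ℝ} (h : ContDiff ℝ (⊤ : ℕ∞) φ) (x : Fin n → ℝ)
    (p q : Fin n) :
    hess φ x p q = fderiv ℝ (fderiv ℝ φ) x (Pi.single p 1) (Pi.single q 1) := by
  have hd : Differentiable ℝ (fderiv ℝ φ) :=
    (h.fderiv_right (m := 1) (by norm_cast)).differentiable (by norm_num)
  simp only [hess, Matrix.of_apply]
  rw [fderiv_clm_apply (hd x) (by fun_prop)]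
  simp

lemma hess_quad {n : ℕ} {φ : (Fin n → ℝ) → ℝ} (h : ContDiff ℝ (⊤ : ℕ∞) φ) (x v : Fin n → ℝ) :
    v ⬝ᵥ (hess φ x).mulVec v = fderiv ℝ (fderiv ℝ φ) x v v := by
  have hv : v = ∑ i, v i • (Pi.single i 1 : Fin n → ℝ) := by
    ext j; simp [Finset.sum_apply, Pi.single_apply]
  conv_rhs => rw [hv]
  simp only [map_sum, map_smul, sum_apply, smul_apply,
    ← hess_apply h, dotProduct, Matrix.mulVec, smul_eq_mul, Finset.mul_sum]
  rw [Finset.sum_comm]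
  refine Finset.sum_congr rfl fun i _ => Finset.sum_congr rfl fun j _ => ?_
  ring

lemma hess_symm {n : ℕ} {φ : (Fin n → ℝ) → ℝ} (h : ContDiff ℝ (⊤ : ℕ∞) φ) (x : Fin n → ℝ) :
    (hess φ x).transpose = hess φ x := by
  ext p q
  rw [Matrix.transpose_apply, hess_apply h, hess_apply h]
  exact (h.contDiffAt.isSymmSndFDerivAt (by simp; norm_cast)).eq _ _

lemma hasDeriv_line2 {n : ℕ} {φ : (Fin n → ℝ) → ℝ} (h : ContDiff ℝ (⊤ : ℕ∞) φ) (x v : Fin n → ℝ) :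
    HasDerivAt (fun s : ℝ => fderiv ℝ φ (x + s • v) v) (v ⬝ᵥ (hess φ x).mulVec v) 0 := by
  have hd : Differentiable ℝ (fderiv ℝ φ) :=
    (h.fderiv_right (m := 1) (by norm_cast)).differentiable (by norm_num)
  have h1 : HasDerivAt (fun s : ℝ => x + s • v) v 0 := by
    simpa using ((hasDerivAt_id (0 : ℝ)).smul_const v).const_add x
  have h2 : HasFDerivAt (fderiv ℝ φ) (fderiv ℝ (fderiv ℝ φ) x) (x + (0 : ℝ) • v) := by
    simpa using (hd x).hasFDerivAt
  have h3 := h2.comp_hasDerivAt (0 : ℝ) h1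
  rw [hess_quad h]
  have := h3.clm_apply (hasDerivAt_const (0 : ℝ) v)
  simpa using this

lemma hess_nonneg {n : ℕ} {φ : (Fin n → ℝ) → ℝ} (h : ContDiff ℝ (⊤ : ℕ∞) φ)
    (hc : ConvexOn ℝ Set.univ φ) (x v : Fin n → ℝ) : 0 ≤ v ⬝ᵥ (hess φ x).mulVec v := by
  have hd : Differentiable ℝ φ := h.differentiable (by simp)
  have hl := hasDeriv_line hd x v
  have hm := (conv_line hc x v).monotoneOn_deriv (fun s _ => (hl s).differentiableAt)
  have he : deriv (fun s : ℝ => φ (x + s • v)) = fun s => fderiv ℝ φ (x + s • v) v :=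
    funext fun s => (hl s).deriv
  rw [he, monotoneOn_univ] at hm
  rw [← (hasDeriv_line2 h x v).deriv]
  exact hm.deriv_nonneg

lemma det_le_pow {n : ℕ} (A : Matrix (Fin n) (Fin n) ℝ) (hA : A.transpose = A) {μ : ℝ}
    (h0 : ∀ u, 0 ≤ u ⬝ᵥ A.mulVec u) (h1 : ∀ u, u ⬝ᵥ A.mulVec u ≤ μ * (u ⬝ᵥ u)) :
    A.det ≤ μ ^ n := by
  have hH : A.IsHermitian := by
    rw [Matrix.IsHermitian, Matrix.conjTranspose_eq_transpose_of_trivial, hA]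
  rw [hH.det_eq_prod_eigenvalues]
  have key : ∀ i, 0 ≤ hH.eigenvalues i ∧ hH.eigenvalues i ≤ μ := by
    intro i
    set u : Fin n → ℝ := ⇑(hH.eigenvectorBasis i) with hu
    have he : A.mulVec u = hH.eigenvalues i • u := hH.mulVec_eigenvectorBasis i
    have hn : u ⬝ᵥ u = 1 := by
      have := hH.eigenvectorBasis.orthonormal.1 i
      rw [EuclideanSpace.norm_eq, Real.sqrt_eq_one] at this
      simp only [dotProduct, ← this, hu]
      refine Finset.sum_congr rfl fun j _ => ?_
      rw [Real.norm_eq_abs, sq_abs, sq]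
    have h0 := h0 u
    have h1 := h1 u
    rw [he, dotProduct_smul, hn] at h0 h1
    simp at h0 h1
    exact ⟨h0, h1⟩
  calc _ ≤ ∏ _i : Fin n, μ := Finset.prod_le_prod (fun i _ => (key i).1) (fun i _ => (key i).2)
    _ = μ ^ n := by simp

lemma exists_localMax {n : ℕ} {g : (Fin n → ℝ) → ℝ} (hg : Continuous g) (a0 : Fin n → ℝ)
    {r μ M : ℝ} (hr : 0 < r) (hμ0 : 0 ≤ μ) (hμ : 2 < μ / 2 * r ^ 2)
    (hM : ∀ a ∈ Metric.closedBall a0 r, g a ≤ M) (h0 : M - 2 ≤ g a0) :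
    ∃ a ∈ Metric.closedBall a0 r,
      IsLocalMax (fun a => g a - μ / 2 * ∑ i, (a i - a0 i) ^ 2) a := by
  have hcont : Continuous (fun a : Fin n → ℝ => g a - μ / 2 * ∑ i, (a i - a0 i) ^ 2) := by
    fun_prop
  obtain ⟨a, ha, hmax⟩ := (isCompact_closedBall a0 r).exists_isMaxOn
    ⟨a0, Metric.mem_closedBall_self hr.le⟩ hcont.continuousOn
  refine ⟨a, ha, ?_⟩
  have hlt : dist a a0 < r := by
    by_contra! hge
    have h1 : g a0 ≤ g a - μ / 2 * ∑ i, (a i - a0 i) ^ 2 := by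
      simpa using hmax (Metric.mem_closedBall_self hr.le)
    obtain ⟨i, hi⟩ : ∃ i, r ≤ |a i - a0 i| := by
      by_contra! hcon
      exact absurd ((dist_pi_lt_iff hr).2 hcon) (not_lt.2 hge)
    have h2 : r ^ 2 ≤ ∑ i, (a i - a0 i) ^ 2 := by
      refine le_trans ?_ (Finset.single_le_sum (f := fun i => (a i - a0 i) ^ 2)
        (fun j _ => sq_nonneg _) (Finset.mem_univ i))
      rw [← sq_abs (a i - a0 i)]
      exact pow_le_pow_left₀ hr.le hi 2
    have h3 := mul_le_mul_of_nonneg_left h2 (show 0 ≤ μ / 2 by linarith)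
    have h4 := hM a ha
    linarith
  exact hmax.isLocalMax (Metric.closedBall_mem_nhds_of_mem hlt)

/-- The key estimate. -/
lemma det_bound {n d : ℕ} (hn : 1 ≤ n) (N : Fin d → Fin n → ℤ) {B : ℝ}
    (hB : ∀ y ∈ Pset N, ∀ j, |y j| ≤ B) {φ : (Fin n → ℝ) → ℝ} (h : ContDiff ℝ (⊤ : ℕ∞) φ)
    (hc : ConvexOn ℝ Set.univ φ) {t : ℝ} (ht : 0 < t) (ht1 : t ≤ 1) (xt : Fin n → ℝ)
    (hmin : ∀ x, wfun N t φ xt ≤ wfun N t φ x) (V : Matrix (Fin n) (Fin n) ℝ)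
    (hV : ∀ i, wfun N t φ (xt + V.col i) ≤ wfun N t φ xt + 1) :
    ∃ x, wfun N t φ x ≤ wfun N t φ xt + 1 ∧
      V.det ^ 2 * (t ^ n * (hess φ x).det) ≤ (24 * (n : ℝ) ^ 2) ^ n := by
  have hn0 : (0 : ℝ) < n := by exact_mod_cast hn
  set m := wfun N t φ xt with hm
  have hwc := w_convex N hB hc ht.le ht1
  have hKc : Convex ℝ {z | wfun N t φ (xt + z) ≤ m + 1} := by
    intro a ha b hb s t' hs ht' hst
    have := hwc.2 (Set.mem_univ (xt + a)) (Set.mem_univ (xt + b)) hs ht' hst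
    have e : s • (xt + a) + t' • (xt + b) = xt + (s • a + t' • b) := by
      have : xt = s • xt + t' • xt := by rw [← add_smul, hst, one_smul]
      conv_rhs => rw [this]
      simp only [smul_add]; abel
    rw [e] at this
    have h1 : wfun N t φ (xt + a) ≤ m + 1 := ha
    have h2 : wfun N t φ (xt + b) ≤ m + 1 := hb
    refine le_trans this ?_
    simp only [smul_eq_mul]
    have h3 := mul_le_mul_of_nonneg_left h1 hs
    have h4 := mul_le_mul_of_nonneg_left h2 ht'
    have : m + 1 = s * (m + 1) + t' * (m + 1) := by rw [← add_mul, hst, one_mul]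
    linarith
  have h0K : (0 : Fin n → ℝ) ∈ {z | wfun N t φ (xt + z) ≤ m + 1} := by
    show wfun N t φ (xt + 0) ≤ m + 1
    rw [add_zero]; linarith
  set a0 : Fin n → ℝ := fun _ => 1 / (2 * n) with ha0
  have hcube : ∀ a ∈ Metric.closedBall a0 (1 / (2 * n)),
      wfun N t φ (xt + V.mulVec a) ≤ m + 1 := by
    intro a ha
    have hai : ∀ i, 0 ≤ n * a i ∧ n * a i ≤ 1 := by
      intro i
      have h1 := le_trans (dist_le_pi_dist a a0 i) ha
      rw [Real.dist_eq, abs_le] at h1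
      simp only [ha0] at h1
      have h2 : (n : ℝ) * (1 / (2 * n)) = 1 / 2 := by field_simp
      constructor <;> nlinarith
    have h2 : V.mulVec a = ∑ i, (1 / (n : ℝ)) • ((n * a i) • V.col i) := by
      ext j
      simp only [Matrix.mulVec, dotProduct, Finset.sum_apply, Pi.smul_apply, smul_eq_mul,
        Matrix.col_apply]
      refine Finset.sum_congr rfl fun i _ => ?_
      field_simp
    have h3 : V.mulVec a ∈ {z | wfun N t φ (xt + z) ≤ m + 1} := by
      rw [h2]
      refine hKc.sum_mem (fun i _ => by positivity) (by simp; field_simp) fun i _ => ?_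
      exact hKc.smul_mem_of_zero_mem h0K (hV i) (hai i)
    exact h3
  obtain ⟨y, hy, hy1⟩ := phi0_near N (xt + V.mulVec a0)
  set g : (Fin n → ℝ) → ℝ := fun a => t * φ (xt + V.mulVec a) +
    (1 - t) * (dotp (xt + V.mulVec a) y - u0 N y) with hg
  have hgc : Continuous g := by
    have h1 := h.continuous
    have h2 : Continuous fun a : Fin n → ℝ => V.mulVec a := by fun_prop
    have h3 : Continuous fun x : Fin n → ℝ => dotp x y := by unfold dotp; fun_prop
    have h4 := h3.comp (h2.const_add xt)
    have h5 := h1.comp (h2.const_add xt)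
    simp only [Function.comp_def] at h4 h5
    rw [hg]
    fun_prop
  have hgw : ∀ a, g a ≤ wfun N t φ (xt + V.mulVec a) := by
    intro a
    have := mul_le_mul_of_nonneg_left (phi0_le N hB (xt + V.mulVec a) y hy) (sub_nonneg.2 ht1)
    simp only [hg, wfun]
    linarith
  obtain ⟨a, ha, hmax⟩ := exists_localMax hgc a0 (r := 1 / (2 * n)) (μ := 24 * (n : ℝ) ^ 2)
    (M := m + 1) (by positivity) (by positivity) (by field_simp; norm_num)
    (fun a ha => (hgw a).trans (hcube a ha)) (by
      have h1 := mul_le_mul_of_nonneg_left hy1.le (sub_nonneg.2 ht1)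
      have h2 := hmin (xt + V.mulVec a0)
      simp only [wfun] at h2
      simp only [hg]
      linarith)
  refine ⟨xt + V.mulVec a, hcube a ha, ?_⟩
  set x := xt + V.mulVec a with hx
  set H := hess φ x with hH
  have hquad : ∀ u, u ⬝ᵥ (V.transpose * (t • H) * V).mulVec u =
      t * (V.mulVec u ⬝ᵥ H.mulVec (V.mulVec u)) := by
    intro u
    rw [← Matrix.mulVec_mulVec, ← Matrix.mulVec_mulVec, Matrix.dotProduct_mulVec,
      Matrix.vecMul_transpose, Matrix.smul_mulVec, dotProduct_smul, smul_eq_mul]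
  have hdet : (V.transpose * (t • H) * V).det = V.det ^ 2 * (t ^ n * H.det) := by
    rw [Matrix.det_mul, Matrix.det_mul, Matrix.det_transpose, Matrix.det_smul]
    simp; ring
  rw [← hdet]
  refine det_le_pow _ ?_ ?_ ?_
  · rw [Matrix.transpose_mul, Matrix.transpose_mul, Matrix.transpose_transpose,
      Matrix.transpose_smul, hess_symm h, Matrix.mul_assoc]
  · intro u
    rw [hquad]
    exact mul_nonneg ht.le (hess_nonneg h hc _ _)
  · intro u
    rw [hquad]
    have hd : Differentiable ℝ φ := h.differentiable (by simp)
    set v := V.mulVec u with hv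
    have hline : ∀ s : ℝ, xt + V.mulVec (a + s • u) = x + s • v := by
      intro s
      rw [Matrix.mulVec_add, Matrix.mulVec_smul, hx, add_assoc]
    have hmax' : IsLocalMax (fun s : ℝ => t * φ (x + s • v) +
        (1 - t) * (dotp x y + s * dotp v y - u0 N y) -
          24 * (n : ℝ) ^ 2 / 2 * ∑ i, (a i + s * u i - a0 i) ^ 2) 0 := by
      have hcl : ContinuousAt (fun s : ℝ => a + s • u) 0 := by fun_prop
      have h1 : IsLocalMax (fun a => g a - 24 * (n : ℝ) ^ 2 / 2 * ∑ i, (a i - a0 i) ^ 2)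
        (a + (0 : ℝ) • u) := by simpa using hmax
      have h2 := hcl.eventually h1
      filter_upwards [h2] with s hs
      simp only [hg, hline] at hs
      simp only [dotp_add, dotp_smul, Pi.add_apply, Pi.smul_apply, smul_eq_mul] at hs
      exact hs
    have hk : ∀ s : ℝ, HasDerivAt (fun s : ℝ => t * φ (x + s • v) +
        (1 - t) * (dotp x y + s * dotp v y - u0 N y) -
          24 * (n : ℝ) ^ 2 / 2 * ∑ i, (a i + s * u i - a0 i) ^ 2)
        (t * fderiv ℝ φ (x + s • v) v + (1 - t) * dotp v y -
          24 * (n : ℝ) ^ 2 / 2 * ∑ i, 2 * (a i + s * u i - a0 i) * u i) s := by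
      intro s
      refine (((hasDeriv_line hd x v s).const_mul t).add ?_).sub ?_
      · have := ((((hasDerivAt_id s).mul_const (dotp v y)).const_add (dotp x y)).sub_const
          (u0 N y)).const_mul (1 - t)
        simpa using this
      · refine HasDerivAt.const_mul _ (HasDerivAt.fun_sum fun i _ => ?_)
        have := ((((hasDerivAt_id s).mul_const (u i)).const_add (a i)).sub_const
          (a0 i)).fun_pow 2
        simpa using this
    have hk' : HasDerivAt (fun s : ℝ => t * fderiv ℝ φ (x + s • v) v + (1 - t) * dotp v y -
          24 * (n : ℝ) ^ 2 / 2 * ∑ i, 2 * (a i + s * u i - a0 i) * u i)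
        (t * (v ⬝ᵥ H.mulVec v) - 24 * (n : ℝ) ^ 2 / 2 * ∑ i, 2 * u i * u i) 0 := by
      refine (((hasDeriv_line2 h x v).const_mul t).add_const _).sub ?_
      refine HasDerivAt.const_mul _ (HasDerivAt.fun_sum fun i _ => ?_)
      have := (((((hasDerivAt_id (0:ℝ)).mul_const (u i)).const_add (a i)).sub_const
          (a0 i)).const_mul 2).mul_const (u i)
      simpa using this
    have hfin := second_deriv_test hk hk' hmax'
    have e : ∑ i, 2 * u i * u i = 2 * (u ⬝ᵥ u) := by
      simp [dotProduct, Finset.mul_sum, mul_assoc]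
    rw [e] at hfin
    linarith

lemma cov {n d : ℕ} (N : Fin d → Fin n → ℤ) {c : Fin n → ℝ} {c₀ t : ℝ}
    {φ : (Fin n → ℝ) → ℝ} (h : IsSolution N c c₀ t φ) :
    ∫⁻ x, ENNReal.ofReal (Real.exp (-c₀ - wfun N t φ x - dotp c (grad φ x))) =
      volume (interior (Pset N)) := by
  obtain ⟨hs, -, hbij, -, heq⟩ := h
  have hd : Differentiable ℝ (fderiv ℝ φ) :=
    (hs.fderiv_right (m := 1) (by norm_cast)).differentiable (by norm_num)
  set L : (Fin n → ℝ) → ((Fin n → ℝ) →L[ℝ] (Fin n → ℝ)) := fun x =>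
    ContinuousLinearMap.pi fun q => fderiv ℝ (fun z => fderiv ℝ φ z (Pi.single q 1)) x with hL
  have hLd : ∀ x, HasFDerivAt (grad φ) (L x) x := by
    intro x
    rw [hasFDerivAt_pi']
    intro q
    have : DifferentiableAt ℝ (fun z => fderiv ℝ φ z (Pi.single q 1)) x :=
      (hd x).clm_apply (by fun_prop)
    exact this.hasFDerivAt
  have hdet : ∀ x, (L x).det = (hess φ x).det := by
    intro x
    rw [← Matrix.det_transpose, ContinuousLinearMap.det, ← LinearMap.det_toMatrix']
    congr 1
  have h1 := lintegral_abs_det_fderiv_eq_addHaar_image volume MeasurableSet.univ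
    (fun x _ => (hLd x).hasFDerivWithinAt) hbij.injOn
  rw [hbij.image_eq, Measure.restrict_univ] at h1
  rw [← h1]
  refine lintegral_congr fun x => ?_
  rw [hdet, heq, abs_of_pos (Real.exp_pos _)]

lemma J_finite (n : ℕ) : ∫⁻ a : Fin n → ℝ, ENNReal.ofReal (Real.exp (-‖a‖ / 2)) < ⊤ := by
  have h1 := finite_integral_one_add_norm (E := Fin n → ℝ) (μ := volume) (r := (n : ℝ) + 1)
    (by simp)
  obtain ⟨C, hC⟩ : ∃ C : ℝ, ∀ s : ℝ, 0 ≤ s → Real.exp (-s / 2) ≤ C * (1 + s) ^ (-((n : ℝ) + 1)) := by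
    refine ⟨2 ^ (n + 1) * (n + 1).factorial * Real.exp (1 / 2), fun s hs => ?_⟩
    have h2 := Real.pow_div_factorial_le_exp ((1 + s) / 2) (by positivity) (n + 1)
    have h3 : (1 + s) ^ (-((n : ℝ) + 1)) = ((1 + s) ^ (n + 1))⁻¹ := by
      rw [Real.rpow_neg (by positivity), ← Real.rpow_natCast]; push_cast; rfl
    have h4 : Real.exp (-s / 2) = Real.exp (1 / 2) * (Real.exp ((1 + s) / 2))⁻¹ := by
      rw [← Real.exp_neg, ← Real.exp_add]; congr 1; ring
    rw [h3, h4]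
    have h5 : (Real.exp ((1 + s) / 2))⁻¹ ≤ (((1 + s) / 2) ^ (n + 1) / ((n + 1).factorial : ℝ))⁻¹ :=
      inv_anti₀ (by positivity) h2
    refine (mul_le_mul_of_nonneg_left h5 (Real.exp_pos _).le).trans (le_of_eq ?_)
    rw [inv_div, div_pow, div_div_eq_mul_div]
    have : (1 + s) ^ (n + 1) ≠ 0 := by positivity
    field_simp
  have h2 : ∫⁻ a : Fin n → ℝ, ENNReal.ofReal (Real.exp (-‖a‖ / 2)) ≤
      ∫⁻ a : Fin n → ℝ, ENNReal.ofReal C * ENNReal.ofReal ((1 + ‖a‖) ^ (-((n : ℝ) + 1))) := by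
    refine lintegral_mono fun a => ?_
    rw [← ENNReal.ofReal_mul' (by positivity)]
    exact ENNReal.ofReal_le_ofReal (hC _ (norm_nonneg _))
  refine h2.trans_lt ?_
  rw [lintegral_const_mul' _ _ ENNReal.ofReal_ne_top]
  exact ENNReal.mul_lt_top ENNReal.ofReal_lt_top h1

lemma lintegral_comp_inv {n : ℕ} (V : Matrix (Fin n) (Fin n) ℝ) (hV : V.det ≠ 0)
    (xt : Fin n → ℝ) (F : (Fin n → ℝ) → ENNReal) (hF : Measurable F) :
    ∫⁻ x, F (V⁻¹.mulVec (x - xt)) = ENNReal.ofReal |V.det| * ∫⁻ a, F a := by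
  have h1 := Real.map_matrix_volume_pi_eq_smul_volume_pi (M := V⁻¹)
    (by rw [Matrix.det_nonsing_inv]; simpa using hV)
  have hm : Measurable (Matrix.toLin' V⁻¹) :=
    (LinearMap.continuous_of_finiteDimensional _).measurable
  rw [lintegral_sub_right_eq_self (fun x => F (V⁻¹.mulVec x)) xt]
  have h2 := lintegral_map (μ := volume) hF hm
  rw [h1, lintegral_smul_measure] at h2
  rw [Matrix.det_nonsing_inv, Ring.inverse_eq_inv', inv_inv] at h2
  simpa using h2.symm

lemma eucNorm_le {n : ℕ} (z : Fin n → ℝ) : eucNorm z ≤ n * ‖z‖ := by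
  unfold eucNorm
  refine Real.sqrt_le_iff.2 ⟨by positivity, ?_⟩
  calc ∑ j, z j ^ 2 ≤ ∑ _j : Fin n, ‖z‖ ^ 2 := by
        refine Finset.sum_le_sum fun j _ => ?_
        rw [← sq_abs]
        exact pow_le_pow_left₀ (abs_nonneg _) (norm_le_pi_norm z j) 2
    _ = n * ‖z‖ ^ 2 := by simp
    _ ≤ (n * ‖z‖) ^ 2 := by
        rw [mul_pow]
        refine mul_le_mul_of_nonneg_right ?_ (by positivity)
        have : n ≤ n ^ 2 := Nat.le_self_pow (by norm_num) n
        exact_mod_cast this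

/-- Near maximal determinant in a bounded-determinant set. -/
lemma exists_frame {n : ℕ} (K : Set (Fin n → ℝ)) {ρ A : ℝ} (hρ : 0 < ρ)
    (hK : ∀ z, ‖z‖ ≤ ρ → z ∈ K)
    (hA : ∀ V : Matrix (Fin n) (Fin n) ℝ, (∀ i, V.col i ∈ K) → |V.det| ≤ A) :
    ∃ V : Matrix (Fin n) (Fin n) ℝ, (∀ i, V.col i ∈ K) ∧ V.det ≠ 0 ∧
      (∀ W : Matrix (Fin n) (Fin n) ℝ, (∀ i, W.col i ∈ K) → |W.det| ≤ 2 * |V.det|) ∧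
      (∀ z ∈ K, ‖V⁻¹.mulVec z‖ ≤ 2) ∧
      (∀ z ∈ K, ‖z‖ ≤ 2 * |V.det| / ρ ^ (n - 1)) := by
  set S : Set ℝ := (fun V : Matrix (Fin n) (Fin n) ℝ => |V.det|) '' {V | ∀ i, V.col i ∈ K} with hS
  have hSb : BddAbove S := ⟨A, by rintro _ ⟨V, hV, rfl⟩; exact hA V hV⟩
  have hdiag : ∀ i, (ρ • (1 : Matrix (Fin n) (Fin n) ℝ)).col i ∈ K := by
    intro i
    apply hK
    refine (pi_norm_le_iff_of_nonneg hρ.le).2 fun j => ?_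
    simp only [Matrix.col_apply, Matrix.smul_apply, Matrix.one_apply, smul_eq_mul, Real.norm_eq_abs]
    split_ifs <;> simp [abs_of_pos hρ, hρ.le]
  have hmem : ρ ^ n ∈ S := ⟨_, hdiag, by simp [abs_of_pos hρ]⟩
  have hpos : 0 < sSup S := lt_of_lt_of_le (pow_pos hρ n) (le_csSup hSb hmem)
  obtain ⟨_, ⟨V, hV, rfl⟩, hlt⟩ := exists_lt_of_lt_csSup ⟨_, hmem⟩ (half_lt_self hpos)
  simp only at hlt
  have hmaxW : ∀ W : Matrix (Fin n) (Fin n) ℝ, (∀ i, W.col i ∈ K) → |W.det| ≤ 2 * |V.det| := by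
    intro W hW
    have := le_csSup hSb ⟨W, hW, rfl⟩
    simp only at this
    linarith
  have hV0 : 0 < |V.det| := by linarith
  have hup : ∀ (U : Matrix (Fin n) (Fin n) ℝ) (_ : ∀ i, U.col i ∈ K) (i : Fin n) (z) (_ : z ∈ K),
      |U.cramer z i| ≤ 2 * |V.det| := by
    intro U hU i z hz
    rw [Matrix.cramer_apply]
    apply hmaxW
    intro j
    by_cases hj : j = i
    · subst hj
      have : (U.updateCol j z).col j = z := by ext k; simp [Matrix.col_apply]
      rwa [this]
    · have : (U.updateCol i z).col j = U.col j := by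
        ext k; simp [Matrix.col_apply, Matrix.updateCol_ne hj]
      rw [this]; exact hU j
  refine ⟨V, hV, abs_pos.1 hV0, hmaxW, ?_, ?_⟩
  · intro z hz
    refine (pi_norm_le_iff_of_nonneg zero_le_two).2 fun i => ?_
    have h1 := hup V hV i z hz
    rw [Matrix.inv_def, Ring.inverse_eq_inv', Matrix.smul_mulVec, ← Matrix.cramer_eq_adjugate_mulVec,
      Pi.smul_apply, smul_eq_mul, Real.norm_eq_abs, abs_mul, abs_inv, inv_mul_le_iff₀ hV0]
    linarith
  · intro z hz
    refine (pi_norm_le_iff_of_nonneg (by positivity)).2 fun i => ?_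
    have h1 := hup _ hdiag i z hz
    rw [Matrix.cramer_smul, Matrix.cramer_one] at h1
    rw [le_div_iff₀ (by positivity), Real.norm_eq_abs]
    simp [abs_mul, abs_of_pos hρ] at h1
    linarith

/-- Uniform coercivity: `w_t(x) ≥ ε|x - x^t| - C` for all `x`, uniformly over
`t ∈ [ε₀,1]` and over solutions at parameter `t`, where `x^t` is the minimum point of
`w_t`. Here `c` is the unique vector with `∫_P yᵢ e^{⟨c,y⟩} dy = 0` for all `i`. -/
theorem w_linear_growth {n d : ℕ} (hn : 1 ≤ n) (N : Fin d → Fin n → ℤ)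
    (hQ : (0 : Fin n → ℝ) ∈ interior (convexHull ℝ (Set.range fun i => fun j => (N i j : ℝ))))
    (c : Fin n → ℝ) (hc : ∀ i, ∫ y in Pset N, y i * Real.exp (dotp c y) = 0)
    (c₀ : ℝ) (ε₀ : ℝ) (hε₀ : ε₀ ∈ Set.Ioc (0 : ℝ) 1) :
    ∃ ε > 0, ∃ C > 0, ∀ t ∈ Set.Icc ε₀ 1, ∀ φ : (Fin n → ℝ) → ℝ, IsSolution N c c₀ t φ →
      ∀ xt : Fin n → ℝ, (∀ x, wfun N t φ xt ≤ wfun N t φ x) →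
        ∀ x : Fin n → ℝ, ε * eucNorm (x - xt) - C ≤ wfun N t φ x := by
  obtain ⟨B, hB1, hB⟩ := Pset_bdd N hQ
  have hn0 : (1 : ℝ) ≤ n := by exact_mod_cast hn
  have hR : 0 < (n : ℝ) * B := by positivity
  set ρ : ℝ := 1 / (n * B) with hρd
  have hρ : 0 < ρ := by positivity
  set Bc : ℝ := n * B * ‖c‖ with hBc
  have hdc : ∀ y ∈ Pset N, |dotp c y| ≤ Bc := fun y hy => abs_dotp_le c y (hB y hy)
  -- volume of the polytope
  have hvpos : 0 < volume (interior (Pset N)) :=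
    isOpen_interior.measure_pos volume ⟨0, zero_mem_int N⟩
  have hvfin : volume (interior (Pset N)) ≠ ⊤ := by
    have hsub : interior (Pset N) ⊆ Metric.closedBall 0 B := by
      intro y hy
      rw [mem_closedBall_zero_iff, pi_norm_le_iff_of_nonneg (by linarith)]
      exact fun j => hB y (interior_subset hy) j
    exact ((measure_mono hsub).trans_lt measure_closedBall_lt_top).ne
  set vP : ℝ := (volume (interior (Pset N))).toReal with hvP
  have hvP0 : 0 < vP := ENNReal.toReal_pos hvpos.ne' hvfin
  have hvPe : volume (interior (Pset N)) = ENNReal.ofReal vP := (ENNReal.ofReal_toReal hvfin).symm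
  set J : ℝ := (∫⁻ a : Fin n → ℝ, ENNReal.ofReal (Real.exp (-‖a‖ / 2))).toReal with hJ
  have hJ0 : 0 ≤ J := ENNReal.toReal_nonneg
  have hJe : ∫⁻ a : Fin n → ℝ, ENNReal.ofReal (Real.exp (-‖a‖ / 2)) = ENNReal.ofReal J :=
    (ENNReal.ofReal_toReal (J_finite n).ne).symm
  -- constants
  set A1 : ℝ := vP / (Real.exp (-c₀ - Bc - 1) * (2 * ρ) ^ n) with hA1
  have hA10 : 0 < A1 := by positivity
  set A2 : ℝ := Real.exp (-c₀ + Bc + 1) * J / vP with hA2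
  have hA20 : 0 ≤ A2 := by positivity
  have hε : 0 < ε₀ := hε₀.1
  set A3 : ℝ := (24 * (n : ℝ) ^ 2) ^ n / (ε₀ ^ n * Real.exp (-c₀ - Bc - 1)) with hA3
  have hA30 : 0 < A3 := by positivity
  set r : ℝ := 2 * (A2 * A3 + 1) / ρ ^ (n - 1) with hr
  have hr0 : 0 < r := by positivity
  refine ⟨1 / (r * n), by positivity, 1 + |Real.log A1|, by positivity, ?_⟩
  intro t ht φ hφ xt hmin x
  have hsol := hφ
  obtain ⟨hs, hsc, hbij, -, heq⟩ := hφ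
  have ht0 : 0 < t := lt_of_lt_of_le hε ht.1
  have hc' := hsc.convexOn
  have hd : Differentiable ℝ φ := hs.differentiable (by simp)
  have hg : ∀ x, grad φ x ∈ Pset N := fun x => interior_subset (hbij.mapsTo (Set.mem_univ x))
  have hcov := cov N hsol
  have hwc := w_convex N hB hc' ht0.le ht.2
  have hwl := w_lip N hB hd hc' hg ht0.le ht.2
  set w := wfun N t φ with hw
  set m := w xt with hm
  have hball : ∀ z, ‖z‖ ≤ ρ → w (xt + z) ≤ m + 1 := by
    intro z hz
    have h1 := hwl xt z
    have h2 := mul_le_mul_of_nonneg_left hz hR.le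
    have h3 : (n : ℝ) * B * ρ = 1 := by rw [hρd]; field_simp
    linarith
  -- lower bound for m
  have hlow : Real.exp (-m) ≤ A1 := by
    have h1 : ENNReal.ofReal (Real.exp (-c₀ - Bc - 1 - m)) * volume (Metric.closedBall xt ρ) ≤
        ENNReal.ofReal vP := by
      rw [← hvPe, ← hcov, ← setLIntegral_const]
      refine (setLIntegral_mono' Metric.isClosed_closedBall.measurableSet fun z hz => ?_).trans
        (setLIntegral_le_lintegral _ _)
      apply ENNReal.ofReal_le_ofReal
      apply Real.exp_le_exp.2
      have h2 := hball (z - xt) (by rwa [← dist_eq_norm])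
      rw [add_sub_cancel] at h2
      have h3 := (abs_le.1 (hdc _ (hg z))).2
      linarith
    rw [Real.volume_pi_closedBall _ hρ.le, Fintype.card_fin,
      ← ENNReal.ofReal_mul (Real.exp_pos _).le, ENNReal.ofReal_le_ofReal_iff hvP0.le] at h1
    rw [hA1, le_div_iff₀ (by positivity)]
    have h2 : Real.exp (-c₀ - Bc - 1 - m) = Real.exp (-c₀ - Bc - 1) * Real.exp (-m) := by
      rw [← Real.exp_add]; congr 1
    rw [h2] at h1
    linarith
  -- determinant bound
  have hdet : ∀ V : Matrix (Fin n) (Fin n) ℝ, (∀ i, V.col i ∈ {z | w (xt + z) ≤ m + 1}) →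
      |V.det| ^ 2 ≤ A3 * Real.exp m := by
    intro V hV
    obtain ⟨z, hz1, hz2⟩ := det_bound hn N hB hs hc' ht0 ht.2 xt hmin V hV
    rw [heq] at hz2
    have h1 : ε₀ ^ n * (Real.exp (-c₀ - Bc - 1) * Real.exp (-m)) ≤
        t ^ n * Real.exp (-c₀ - wfun N t φ z - dotp c (grad φ z)) := by
      refine mul_le_mul (pow_le_pow_left₀ hε.le ht.1 n) ?_ (by positivity) (by positivity)
      rw [← Real.exp_add]
      apply Real.exp_le_exp.2
      have h3 := (abs_le.1 (hdc _ (hg z))).2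
      linarith
    have h2 := (mul_le_mul_of_nonneg_left h1 (sq_nonneg V.det)).trans hz2
    rw [hA3, sq_abs, div_mul_eq_mul_div, le_div_iff₀ (by positivity)]
    have h3 := mul_le_mul_of_nonneg_right h2 (Real.exp_pos m).le
    have h4 : Real.exp (-m) * Real.exp m = 1 := by rw [← Real.exp_add]; simp
    calc _ = V.det ^ 2 * (ε₀ ^ n * (Real.exp (-c₀ - Bc - 1) * Real.exp (-m))) * Real.exp m := by
          linear_combination (-(V.det ^ 2 * ε₀ ^ n * Real.exp (-c₀ - Bc - 1))) * h4
      _ ≤ _ := h3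
  obtain ⟨V, hVK, hV0, -, hVinv, hVz⟩ := exists_frame {z | w (xt + z) ≤ m + 1} hρ hball
    (A := Real.sqrt (A3 * Real.exp m)) (fun V hV => Real.le_sqrt_of_sq_le (hdet V hV))
  -- upper bound for exp m
  have hup : Real.exp m ≤ A2 * |V.det| := by
    have hgr := growth hwc (xt := xt) (fun z => ‖V⁻¹.mulVec z‖)
      (fun a z ha => by simp only [Matrix.mulVec_smul, norm_smul, Real.norm_eq_abs, abs_of_nonneg ha])
      zero_le_two hmin hVinv
    have h1 : ENNReal.ofReal vP ≤ ENNReal.ofReal (Real.exp (-c₀ + Bc + 1 - m)) *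
        (ENNReal.ofReal |V.det| * ENNReal.ofReal J) := by
      rw [← hvPe, ← hcov, ← hJe, ← lintegral_comp_inv V hV0 xt
        (fun a => ENNReal.ofReal (Real.exp (-‖a‖ / 2))) (by fun_prop),
        ← lintegral_const_mul' _ _ ENNReal.ofReal_ne_top]
      refine lintegral_mono fun z => ?_
      rw [← ENNReal.ofReal_mul (Real.exp_pos _).le, ← Real.exp_add]
      apply ENNReal.ofReal_le_ofReal
      apply Real.exp_le_exp.2
      have h2 := hgr (z - xt)
      simp only [add_sub_cancel] at h2
      have h3 := (abs_le.1 (hdc _ (hg z))).1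
      linarith
    rw [← ENNReal.ofReal_mul (abs_nonneg _), ← ENNReal.ofReal_mul (Real.exp_pos _).le,
      ENNReal.ofReal_le_ofReal_iff (by positivity)] at h1
    have h2 : Real.exp (-c₀ + Bc + 1 - m) * Real.exp m = Real.exp (-c₀ + Bc + 1) := by
      rw [← Real.exp_add]; congr 1; ring
    have h3 := mul_le_mul_of_nonneg_right h1 (Real.exp_pos m).le
    rw [hA2, div_mul_eq_mul_div, le_div_iff₀ hvP0, ← h2]
    linarith
  have hVdet : |V.det| ≤ A2 * A3 := by
    have h1 := hdet V hVK
    have h2 := mul_le_mul_of_nonneg_left hup hA30.le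
    have h3 : 0 < |V.det| := abs_pos.2 hV0
    have h4 : |V.det| * |V.det| ≤ (A2 * A3) * |V.det| := by nlinarith
    exact le_of_mul_le_mul_right h4 h3
  have hKr : ∀ z, w (xt + z) ≤ w xt + 1 → ‖z‖ ≤ r := by
    intro z hz
    refine (hVz z hz).trans ?_
    rw [hr]
    gcongr
    linarith
  have hfin := growth hwc (xt := xt) (fun z => ‖z‖)
      (fun a z ha => by simp only [norm_smul, Real.norm_eq_abs, abs_of_nonneg ha])
      hr0.le hmin hKr (x - xt)
  simp only [add_sub_cancel] at hfin
  have hml : -|Real.log A1| ≤ m := by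
    have h1 := (Real.le_log_iff_exp_le hA10).2 hlow
    have h2 := le_abs_self (Real.log A1)
    linarith
  have he := eucNorm_le (x - xt)
  have h5 : 1 / (r * n) * eucNorm (x - xt) ≤ 1 + w x - m := by
    rw [one_div, inv_mul_le_iff₀ (by positivity)]
    calc _ ≤ n * ‖x - xt‖ := he
      _ ≤ n * (r * (1 + w x - m)) := by gcongr
      _ = _ := by ring
  linarith
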